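/- Fix constants 0 < δ ≤ Δ, an integer k ≥ 2, and α ∈ (−1/2, 1). There exist constants c₀, c₁ > 0 and T₀ ∈ ℕ such that: for every Alice value density v_A, every deterministic Alice strategy S_A for the repeated k-cut game, and every horizon T ≥ T₀, there exist a Bob value density v_B (measurable, bounded above and below by positive constants depending only on δ and Δ, with total integral 1) and a deterministic Bob strategy whose regret over horizon T is at most c₀·T^α, such that Alice's Stackelberg regret under S_A over horizon T is at least c₁·T^{(2+α)/3}/k. -/

import Mathlib

open MeasureTheory Set

noncomputable section

attribute [local instance] Classical.propDecidable

/-- A value density: measurable, bounded in `[δ, Δ]` on `[0,1]`, integrating to 1 on `[0,1]`. -/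
def IsValueDensity (δ Δ : ℝ) (v : ℝ → ℝ) : Prop :=
  Measurable v ∧ (∀ x ∈ Set.Icc (0:ℝ) 1, v x ∈ Set.Icc δ Δ) ∧
    (∫ x in Set.Icc (0:ℝ) 1, v x) = 1

/-- The value of a piece `S` under density `v`. -/
def pieceVal (v : ℝ → ℝ) (S : Set ℝ) : ℝ := ∫ x in S, v x

/-- Extended cut points: `0, c 0, …, c (k-1), 1`. -/
def extCuts (k : ℕ) (c : Fin k → ℝ) : ℕ → ℝ := fun i =>
  if i = 0 then 0 else if h : i - 1 < k then c ⟨i - 1, h⟩ else 1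

/-- A valid vector of `k` cut points: nondecreasing, within `[0,1]`. -/
def ValidCuts (k : ℕ) (c : Fin k → ℝ) : Prop :=
  Monotone c ∧ ∀ i, c i ∈ Set.Icc (0:ℝ) 1

/-- The two pieces of the alternating partition induced by cuts `c`:
`true` gives the union of even-indexed intervals, `false` the odd-indexed ones. -/
def altPiece (k : ℕ) (c : Fin k → ℝ) (b : Bool) : Set ℝ :=
  ⋃ i ∈ Finset.range (k + 1),
    if decide (i % 2 = 0) = b then Set.Icc (extCuts k c i) (extCuts k c (i + 1)) else ∅

/-- Alice's Stackelberg value with `k` cuts: max of `V_A(Z_A)` over alternating partitions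
`(Z_A, Z_B)` induced by `k` cut points with `V_B(Z_B) ≥ 1/2`. -/
def stackelbergValue (k : ℕ) (vA vB : ℝ → ℝ) : ℝ :=
  sSup { u : ℝ | ∃ (c : Fin k → ℝ) (b : Bool), ValidCuts k c ∧
    1 / 2 ≤ pieceVal vB (altPiece k c (!b)) ∧ u = pieceVal vA (altPiece k c b) }

/-- A history of play: the list of (Alice's cuts, Bob's choice) in past rounds. -/
abbrev Hist (k : ℕ) := List ((Fin k → ℝ) × Bool)

/-- Alice's deterministic strategy: horizon and history ↦ next cut vector. -/
abbrev AliceStrategy (k : ℕ) := ℕ → Hist k → (Fin k → ℝ)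

/-- Bob's deterministic strategy: horizon, history, and Alice's current cuts ↦ choice. -/
abbrev BobStrategy (k : ℕ) := ℕ → Hist k → (Fin k → ℝ) → Bool

/-- The history of play after `t` rounds. -/
def playHist (k : ℕ) (SA : AliceStrategy k) (SB : BobStrategy k) (T : ℕ) : ℕ → Hist k
  | 0 => []
  | t + 1 =>
      let h := playHist k SA SB T t
      let cuts := SA T h
      h ++ [(cuts, SB T h cuts)]

/-- Alice's cuts in round `t` (0-indexed). -/
def roundCuts (k : ℕ) (SA : AliceStrategy k) (SB : BobStrategy k) (T t : ℕ) : Fin k → ℝ :=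
  SA T (playHist k SA SB T t)

/-- Bob's choice in round `t` (0-indexed). -/
def roundChoice (k : ℕ) (SA : AliceStrategy k) (SB : BobStrategy k) (T t : ℕ) : Bool :=
  SB T (playHist k SA SB T t) (roundCuts k SA SB T t)

/-- Alice's Stackelberg regret over horizon `T`: in each round she receives the value of
the piece Bob did not choose. -/
def aliceRegret (k : ℕ) (vA vB : ℝ → ℝ) (SA : AliceStrategy k) (SB : BobStrategy k)
    (T : ℕ) : ℝ :=
  ∑ t ∈ Finset.range T,
    (stackelbergValue k vA vB -
      pieceVal vA (altPiece k (roundCuts k SA SB T t) (!(roundChoice k SA SB T t))))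

/-- Bob's regret over horizon `T` relative to always choosing his preferred piece. -/
def bobRegret (k : ℕ) (vB : ℝ → ℝ) (SA : AliceStrategy k) (SB : BobStrategy k) (T : ℕ) : ℝ :=
  ∑ t ∈ Finset.range T,
    (max (pieceVal vB (altPiece k (roundCuts k SA SB T t) true))
        (pieceVal vB (altPiece k (roundCuts k SA SB T t) false)) -
      pieceVal vB (altPiece k (roundCuts k SA SB T t) (roundChoice k SA SB T t)))

/-- Bob's strategy guarantees regret at most `R T` against every Alice strategy and horizon. -/
def BobGuarantees (k : ℕ) (vB : ℝ → ℝ) (SB : BobStrategy k) (R : ℕ → ℝ) : Prop :=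
  ∀ (SA : AliceStrategy k) (T : ℕ), bobRegret k vB SA SB T ≤ R T

/-- The myopic Bob: chooses the piece of larger `V_B`-value, breaking ties towards
the piece of smaller `V_A`-value. -/
def myopicBob (k : ℕ) (vA vB : ℝ → ℝ) : BobStrategy k := fun _ _ c =>
  if pieceVal vB (altPiece k c false) < pieceVal vB (altPiece k c true) then true
  else if pieceVal vB (altPiece k c true) < pieceVal vB (altPiece k c false) then false
  else if pieceVal vA (altPiece k c true) ≤ pieceVal vA (altPiece k c false) then true
  else false

/-- Alice's strategy always produces valid cut vectors. -/
def AliceValid (k : ℕ) (SA : AliceStrategy k) : Prop := ∀ T h, ValidCuts k (SA T h)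

/-!
A change of variable makes Alice's density uniform. Bob's base density is `1 + κ` on every other
one of `k + 1` zones and `1 - κ` on the rest, where `κ = 1 / (2k)`. On top of it he may have a bump:
value moved from the right to the left half of one of `N` slots, each half of width `w ∼ κ / N`.
Bob always chooses as if there were no bump. His choices therefore reveal nothing, while a bump
raises Alice's Stackelberg value by about `w / 2`, so that she loses `∼ w` in every round.

This behaviour costs Bob at most `w` in a round, and nothing unless Alice cuts inside the slot and,
moreover, far from the zone boundaries. The latter leaves so much to Bob that it costs her `∼ κ ^ 2`
in the round. Let `P` be the number of such expensive rounds. If `P κ ^ 2 ≥ T w`, she has regret at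
least `∼ T w` even without a bump. Otherwise some slot is hit in at most `k P / N` of those rounds,
and with the bump there Bob's regret is at most `w k P / N ≲ k T / N ^ 3`, while Alice's is at least
`∼ T w ∼ T / (k N)`. Taking `N ∼ T ^ ((1 - α) / 3)` gives both bounds.
-/

section Partition

variable {k : ℕ} {c : Fin k → ℝ}

theorem extCuts_zero (c : Fin k → ℝ) : extCuts k c 0 = 0 := if_pos rfl

theorem extCuts_last (c : Fin k → ℝ) : extCuts k c (k + 1) = 1 := by simp [extCuts]

theorem extCuts_succ (c : Fin k → ℝ) (i : Fin k) : extCuts k c (i + 1) = c i := by simp [extCuts]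

theorem extCuts_eq_one (c : Fin k → ℝ) {i : ℕ} (hi : k < i) : extCuts k c i = 1 := by
  simp only [extCuts]
  rw [if_neg (by lia), dif_neg (by lia)]

theorem ValidCuts.extCuts_mem_Icc (hc : ValidCuts k c) (i : ℕ) : extCuts k c i ∈ Icc (0 : ℝ) 1 := by
  simp only [extCuts]
  split_ifs
  · exact ⟨le_rfl, zero_le_one⟩
  · exact hc.2 _
  · exact ⟨zero_le_one, le_rfl⟩

theorem ValidCuts.monotone_extCuts (hc : ValidCuts k c) : Monotone (extCuts k c) := by
  refine monotone_nat_of_le_succ fun i => ?_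
  rcases lt_or_ge k (i + 1) with hik | hik
  · exact (hc.extCuts_mem_Icc i).2.trans_eq (extCuts_eq_one c hik).symm
  · rcases Nat.eq_zero_or_pos i with rfl | hi
    · exact (extCuts_zero c).trans_le (hc.extCuts_mem_Icc 1).1
    · obtain ⟨j, rfl⟩ := Nat.exists_eq_add_of_lt hi
      rw [zero_add, extCuts_succ c ⟨j, by lia⟩, extCuts_succ c ⟨j + 1, by lia⟩]
      exact hc.1 (Fin.mk_le_mk.2 j.le_succ)

theorem validCuts_of_forall_extCuts_le (h : ∀ i ≤ k, extCuts k c i ≤ extCuts k c (i + 1)) :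
    ValidCuts k c := by
  have hmono : Monotone (extCuts k c) := monotone_nat_of_le_succ fun i => by
    rcases le_or_gt i k with hi | hi
    · exact h i hi
    · rw [extCuts_eq_one c hi, extCuts_eq_one c (hi.trans i.lt_succ_self)]
  refine ⟨fun i j hij => ?_, fun i => ?_⟩
  · rw [← extCuts_succ c, ← extCuts_succ c]
    exact hmono (Nat.succ_le_succ hij)
  · rw [← extCuts_succ c, ← extCuts_zero c, ← extCuts_last c]
    exact ⟨hmono (Nat.zero_le _), hmono (Nat.succ_le_succ i.isLt.le)⟩

theorem mem_altPiece {b : Bool} {x : ℝ} :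
    x ∈ altPiece k c b ↔
      ∃ i ≤ k, decide (i % 2 = 0) = b ∧ x ∈ Icc (extCuts k c i) (extCuts k c (i + 1)) := by
  simp only [altPiece, mem_iUnion, Finset.mem_range, Nat.lt_succ_iff, exists_prop]
  refine exists_congr fun i => and_congr_right fun _ => ?_
  split_ifs with h <;> simp [h]

theorem measurableSet_altPiece (c : Fin k → ℝ) (b : Bool) : MeasurableSet (altPiece k c b) := by
  refine Finset.measurableSet_biUnion _ fun i _ => ?_
  split_ifs
  exacts [measurableSet_Icc, MeasurableSet.empty]

theorem ValidCuts.altPiece_subset_Icc (hc : ValidCuts k c) (b : Bool) :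
    altPiece k c b ⊆ Icc 0 1 := by
  intro x hx
  obtain ⟨i, -, -, hix⟩ := mem_altPiece.1 hx
  exact ⟨(hc.extCuts_mem_Icc i).1.trans hix.1, hix.2.trans (hc.extCuts_mem_Icc (i + 1)).2⟩

theorem ValidCuts.volume_altPiece_ne_top (hc : ValidCuts k c) (b : Bool) :
    volume (altPiece k c b) ≠ ⊤ :=
  measure_ne_top_of_subset (hc.altPiece_subset_Icc b) measure_Icc_lt_top.ne

theorem Icc_subset_altPiece_union (c : Fin k → ℝ) (b : Bool) :
    Icc 0 1 ⊆ altPiece k c b ∪ altPiece k c (!b) := by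
  intro x hx
  have hex : ∃ i, x ≤ extCuts k c (i + 1) := ⟨k, hx.2.trans_eq (extCuts_last c).symm⟩
  have hle : extCuts k c (Nat.find hex) ≤ x := by
    rcases hi : Nat.find hex with _ | i
    · exact (extCuts_zero c).trans_le hx.1
    · exact (not_le.1 (Nat.find_min hex (hi ▸ i.lt_succ_self))).le
  have hcell := mem_altPiece.2 ⟨Nat.find hex,
    Nat.find_min' hex (hx.2.trans_eq (extCuts_last c).symm), rfl, hle, Nat.find_spec hex⟩
  rcases Bool.eq_or_eq_not (decide (Nat.find hex % 2 = 0)) b with h | h <;> rw [h] at hcell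
  exacts [Or.inl hcell, Or.inr hcell]

theorem Icc_subset_altPiece (c : Fin k → ℝ) {i : ℕ} (hi : i ≤ k) :
    Icc (extCuts k c i) (extCuts k c (i + 1)) ⊆ altPiece k c (decide (i % 2 = 0)) :=
  fun _ hx => mem_altPiece.2 ⟨i, hi, rfl, hx⟩

theorem ValidCuts.disjoint_Ioo_altPiece (hc : ValidCuts k c) (i : ℕ) :
    Disjoint (Ioo (extCuts k c i) (extCuts k c (i + 1))) (altPiece k c !decide (i % 2 = 0)) := by
  refine disjoint_left.2 fun x hxi hx => ?_
  obtain ⟨j, -, hj, hxj⟩ := mem_altPiece.1 hx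
  rcases lt_trichotomy i j with h | rfl | h
  · exact ((hxi.2.trans_le (hc.monotone_extCuts h)).trans_le hxj.1).false
  · simp at hj
  · exact ((hxj.2.trans (hc.monotone_extCuts h)).trans_lt hxi.1).false

theorem ValidCuts.altPiece_union (hc : ValidCuts k c) (b : Bool) :
    altPiece k c b ∪ altPiece k c (!b) = Icc 0 1 :=
  (union_subset (hc.altPiece_subset_Icc b) (hc.altPiece_subset_Icc _)).antisymm
    (Icc_subset_altPiece_union c b)

theorem ValidCuts.pairwise_aedisjoint_Icc (hc : ValidCuts k c) :
    Pairwise (Function.onFun (AEDisjoint volume)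
      fun i => Icc (extCuts k c i) (extCuts k c (i + 1))) := fun _ _ hij =>
  ((hc.monotone_extCuts.pairwise_disjoint_on_Ioo_succ hij).aedisjoint).congr
    Ioo_ae_eq_Icc.symm Ioo_ae_eq_Icc.symm

theorem ValidCuts.aedisjoint_altPiece (hc : ValidCuts k c) (b : Bool) :
    AEDisjoint volume (altPiece k c b) (altPiece k c (!b)) := by
  simp only [altPiece, AEDisjoint.iUnion_left_iff, AEDisjoint.iUnion_right_iff]
  intro i _ j _
  split_ifs with hi hj
  · refine hc.pairwise_aedisjoint_Icc fun hij => ?_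
    simp [← hij, hi] at hj
  all_goals simp [AEDisjoint]

theorem ValidCuts.pieceVal_add (hc : ValidCuts k c) {v : ℝ → ℝ} (hv : IntegrableOn v (Icc 0 1))
    (b : Bool) :
    pieceVal v (altPiece k c b) + pieceVal v (altPiece k c (!b)) = pieceVal v (Icc 0 1) := by
  rw [← hc.altPiece_union b]
  exact (setIntegral_union₀ (hc.aedisjoint_altPiece b)
    (measurableSet_altPiece c _).nullMeasurableSet (hv.mono_set (hc.altPiece_subset_Icc b))
    (hv.mono_set (hc.altPiece_subset_Icc _))).symm

theorem ValidCuts.volume_altPiece (hc : ValidCuts k c) (b : Bool) :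
    volume.real (altPiece k c b) = ∑ i ∈ Finset.range (k + 1),
      if decide (i % 2 = 0) = b then extCuts k c (i + 1) - extCuts k c i else 0 := by
  rw [altPiece, measureReal_biUnion_finset₀ _ _ fun i _ => ?_]
  · refine Finset.sum_congr rfl fun i _ => ?_
    split_ifs
    exacts [Real.volume_real_Icc_of_le (hc.monotone_extCuts i.le_succ), measureReal_empty]
  · intro i _ j _ hij
    simp only [Function.onFun]
    split_ifs
    · exact hc.pairwise_aedisjoint_Icc hij
    all_goals simp [AEDisjoint]
  · intro i _
    split_ifs
    exacts [measurableSet_Icc.nullMeasurableSet, nullMeasurableSet_empty]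
  · split_ifs
    exacts [isCompact_Icc.measure_ne_top, by simp]

/-- Piece changes between consecutive points force a cut in between, and only `k` cuts are
available. -/
theorem ValidCuts.eq_false_and_mem_Icc_of_alternating (hc : ValidCuts k c) {b : Bool}
    {x : Fin (k + 1) → ℝ} (hx : StrictMono x)
    (hmem : ∀ i : Fin (k + 1), x i ∈ altPiece k c (xor b (decide (i.val % 2 = 0)))) :
    b = false ∧ ∀ i : Fin (k + 1), x i ∈ Icc (extCuts k c i) (extCuts k c (i + 1)) := by
  choose cell hcell hparity hxcell using fun i => mem_altPiece.1 (hmem i)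
  let f : Fin (k + 1) → Fin (k + 1) := fun i => ⟨cell i, Nat.lt_succ_of_le (hcell i)⟩
  have hf : StrictMono f := by
    refine Fin.strictMono_iff_lt_succ.2 fun i => ?_
    have hne : cell i.castSucc ≠ cell i.succ := by
      intro h
      have h₀ := hparity i.castSucc
      rw [h, hparity i.succ, Bool.xor_right_inj, decide_eq_decide, Fin.val_succ,
        Fin.val_castSucc] at h₀
      lia
    refine Fin.mk_lt_mk.2 (lt_of_le_of_ne (not_lt.1 fun hlt => ?_) hne)
    exact (hx i.castSucc_lt_succ).not_ge <| (hxcell i.succ).2.trans <|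
      (hc.monotone_extCuts hlt).trans (hxcell i.castSucc).1
  have hid : ∀ i : Fin (k + 1), cell i = i := fun i => congrArg Fin.val (congrFun hf.eq_id i)
  refine ⟨?_, fun i => ?_⟩
  · have h₀ := hparity 0
    rw [hid 0] at h₀
    simpa using h₀
  · simpa only [hid i] using hxcell i

end Partition

section Zones

variable {k : ℕ}

/-- Half the width of an inner zone of Bob's base density. -/
def zoneUnit (k : ℕ) : ℝ := 1 / (2 * k)

/-- The cuts at the odd multiples of `zoneUnit k`. They bound `k + 1` zones, the two outer ones
half as wide as the others, so that the zones of either parity have total length `1 / 2`. -/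
def zoneCuts (k : ℕ) : Fin k → ℝ := fun i => (2 * i + 1) * zoneUnit k

/-- The union of the odd-indexed zones, which Bob's base density favours. -/
def bobZones (k : ℕ) : Set ℝ := altPiece k (zoneCuts k) false

/-- The open interval of length `zoneUnit k` at the left end of the `i`-th zone. -/
def zoneCore (k i : ℕ) : Set ℝ :=
  Ioo (extCuts k (zoneCuts k) i) (extCuts k (zoneCuts k) i + zoneUnit k)

theorem zoneUnit_pos (hk : 0 < k) : 0 < zoneUnit k := by
  unfold zoneUnit; positivity

theorem two_mul_mul_zoneUnit (hk : 0 < k) : 2 * k * zoneUnit k = 1 :=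
  mul_one_div_cancel (by positivity)

theorem zoneUnit_le_half (hk : 0 < k) : zoneUnit k ≤ 1 / 2 := by
  have hk₁ : (1 : ℝ) ≤ k := by exact_mod_cast hk
  unfold zoneUnit
  gcongr
  linarith

theorem extCuts_zoneCuts_succ {i : ℕ} (hi : i < k) :
    extCuts k (zoneCuts k) (i + 1) = (2 * i + 1) * zoneUnit k :=
  extCuts_succ (zoneCuts k) ⟨i, hi⟩

theorem extCuts_zoneCuts_one (hk : 0 < k) : extCuts k (zoneCuts k) 1 = zoneUnit k := by
  simpa using extCuts_zoneCuts_succ hk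

theorem extCuts_zoneCuts_two (hk : 2 ≤ k) : extCuts k (zoneCuts k) 2 = 3 * zoneUnit k := by
  rw [extCuts_zoneCuts_succ (i := 1) (by lia)]
  norm_num

theorem extCuts_zoneCuts_add_le {i : ℕ} (hk : 0 < k) (hi : i ≤ k) :
    extCuts k (zoneCuts k) i + zoneUnit k ≤ extCuts k (zoneCuts k) (i + 1) := by
  have hκ := zoneUnit_pos hk
  rcases i with _ | i
  · rw [extCuts_zero, extCuts_zoneCuts_succ hk]
    simp
  rw [extCuts_zoneCuts_succ (by lia)]
  rcases Nat.lt_or_ge (i + 1) k with h | h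
  · rw [extCuts_zoneCuts_succ h]
    push_cast
    linarith
  · obtain rfl : k = i + 1 := by lia
    have h₁ := two_mul_mul_zoneUnit hk
    rw [extCuts_last]
    push_cast at h₁ ⊢
    linarith

theorem validCuts_zoneCuts (k : ℕ) : ValidCuts k (zoneCuts k) := by
  rcases Nat.eq_zero_or_pos k with rfl | hk
  · exact ⟨fun i => i.elim0, fun i => i.elim0⟩
  · exact validCuts_of_forall_extCuts_le fun i hi => by
      linarith [extCuts_zoneCuts_add_le hk hi, zoneUnit_pos hk]

theorem measurableSet_bobZones (k : ℕ) : MeasurableSet (bobZones k) := measurableSet_altPiece _ _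

theorem bobZones_subset_Icc (k : ℕ) : bobZones k ⊆ Icc 0 1 :=
  (validCuts_zoneCuts k).altPiece_subset_Icc _

theorem volume_bobZones_ne_top (k : ℕ) : volume (bobZones k) ≠ ⊤ :=
  (validCuts_zoneCuts k).volume_altPiece_ne_top _

theorem sum_odd_zone_lengths {n : ℕ} (hn : n ≤ k) :
    ∑ i ∈ Finset.range n, (if decide (i % 2 = 0) = false then
      extCuts k (zoneCuts k) (i + 1) - extCuts k (zoneCuts k) i else 0) =
      2 * (n / 2 : ℕ) * zoneUnit k := by
  induction n with
  | zero => simp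
  | succ n ih =>
    rw [Finset.sum_range_succ, ih (by lia)]
    rcases Nat.even_or_odd' n with ⟨m, rfl | rfl⟩
    · have h : (2 * m + 1) / 2 = m := by lia
      simp [h]
    · have h₁ : (2 * m + 1) / 2 = m := by lia
      have h₂ : (2 * m + 1 + 1) / 2 = m + 1 := by lia
      rw [if_pos (by simp), extCuts_zoneCuts_succ (by lia), extCuts_zoneCuts_succ (by lia), h₁, h₂]
      push_cast
      ring

theorem volume_bobZones (hk : 0 < k) : volume.real (bobZones k) = 1 / 2 := by
  rw [bobZones, (validCuts_zoneCuts k).volume_altPiece, Finset.sum_range_succ,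
    sum_odd_zone_lengths le_rfl, extCuts_last]
  have hκ := two_mul_mul_zoneUnit hk
  rcases Nat.even_or_odd' k with ⟨m, rfl | rfl⟩
  · simp only [Nat.mul_mod_right, Nat.mul_div_cancel_left m two_pos] at hκ ⊢
    push_cast at hκ ⊢
    simp only [decide_true, Bool.true_eq_false, if_false]
    linarith
  · have h : (2 * m + 1) / 2 = m := by lia
    rw [if_pos (by simp), extCuts_zoneCuts_succ (by lia), h]
    push_cast at hκ ⊢
    linarith

theorem volume_zoneCore (hk : 0 < k) (i : ℕ) : volume.real (zoneCore k i) = zoneUnit k := by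
  have hκ := zoneUnit_pos hk
  rw [zoneCore, Real.volume_real_Ioo_of_le (by linarith), add_sub_cancel_left]

theorem zoneCore_subset (hk : 0 < k) {i : ℕ} (hi : i ≤ k) :
    zoneCore k i ⊆ Ioo (extCuts k (zoneCuts k) i) (extCuts k (zoneCuts k) (i + 1)) :=
  Ioo_subset_Ioo_right (extCuts_zoneCuts_add_le hk hi)

theorem zoneCore_subset_Icc (hk : 0 < k) {i : ℕ} (hi : i ≤ k) : zoneCore k i ⊆ Icc 0 1 :=
  ((zoneCore_subset hk hi).trans Ioo_subset_Icc_self).trans <|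
    (Icc_subset_altPiece _ hi).trans ((validCuts_zoneCuts k).altPiece_subset_Icc _)

theorem zoneCore_subset_bobZones (hk : 0 < k) {i : ℕ} (hi : i ≤ k) (hodd : i % 2 ≠ 0) :
    zoneCore k i ⊆ bobZones k := by
  have h := Icc_subset_altPiece (zoneCuts k) hi
  rw [decide_eq_false hodd] at h
  exact (zoneCore_subset hk hi).trans (Ioo_subset_Icc_self.trans h)

theorem disjoint_zoneCore_bobZones (hk : 0 < k) {i : ℕ} (hi : i ≤ k) (heven : i % 2 = 0) :
    Disjoint (zoneCore k i) (bobZones k) := by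
  have h := (validCuts_zoneCuts k).disjoint_Ioo_altPiece i
  rw [decide_eq_true heven] at h
  exact h.mono_left (zoneCore_subset hk hi)

end Zones

section Densities

variable {k : ℕ} {a w : ℝ} {S : Set ℝ}

/-- Bob's density up to a bump: slightly larger on his zones than elsewhere. -/
def baseDensity (k : ℕ) : ℝ → ℝ := fun x =>
  1 - zoneUnit k + (bobZones k).indicator (fun _ => 2 * zoneUnit k) x

/-- Bob's density with a bump: value is moved from `(a + w, a + 2w)` to `(a, a + w)`. -/
def bumpDensity (k : ℕ) (a w : ℝ) : ℝ → ℝ := fun x =>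
  baseDensity k x + (Ioo a (a + w)).indicator (fun _ => 1 / 2) x -
    (Ioo (a + w) (a + 2 * w)).indicator (fun _ => 1 / 2) x

/-- The length Bob needs in order to collect value `1 / 2` inside his zones. -/
def minShare (k : ℕ) : ℝ := 1 / (2 * (1 + zoneUnit k))

/-- The interval `(a, a + 2w)`, a possible place for a bump, lies in the last eighth of the first
inner zone. -/
structure IsSlot (k : ℕ) (a w : ℝ) : Prop where
  left_le : 11 / 4 * zoneUnit k ≤ a
  width_nonneg : 0 ≤ w
  right_le : a + 2 * w ≤ 3 * zoneUnit k

theorem measurable_baseDensity (k : ℕ) : Measurable (baseDensity k) :=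
  measurable_const.add (measurable_const.indicator (measurableSet_bobZones k))

theorem measurable_bumpDensity (k : ℕ) (a w : ℝ) : Measurable (bumpDensity k a w) :=
  ((measurable_baseDensity k).add (measurable_const.indicator measurableSet_Ioo)).sub
    (measurable_const.indicator measurableSet_Ioo)

theorem integrableOn_indicator_const {B : Set ℝ} (hB : MeasurableSet B) (hS : volume S ≠ ⊤)
    (r : ℝ) : IntegrableOn (B.indicator fun _ => r) S :=
  (integrableOn_const hS).indicator hB

theorem setIntegral_indicator_const {B : Set ℝ} (hB : MeasurableSet B) (r : ℝ) :
    ∫ x in S, B.indicator (fun _ => r) x = volume.real (S ∩ B) * r := by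
  rw [setIntegral_indicator hB, setIntegral_const, smul_eq_mul]

theorem integrableOn_baseDensity (hS : volume S ≠ ⊤) : IntegrableOn (baseDensity k) S :=
  (integrableOn_const hS).add (integrableOn_indicator_const (measurableSet_bobZones k) hS _)

theorem integrableOn_bumpDensity (hS : volume S ≠ ⊤) : IntegrableOn (bumpDensity k a w) S :=
  ((integrableOn_baseDensity hS).add (integrableOn_indicator_const measurableSet_Ioo hS _)).sub
    (integrableOn_indicator_const measurableSet_Ioo hS _)

theorem pieceVal_baseDensity (hS : volume S ≠ ⊤) :
    pieceVal (baseDensity k) S =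
      (1 - zoneUnit k) * volume.real S + 2 * zoneUnit k * volume.real (S ∩ bobZones k) := by
  have hH := measurableSet_bobZones k
  simp only [pieceVal, baseDensity]
  rw [integral_add (integrableOn_const hS (C := 1 - zoneUnit k)).integrable
    (integrableOn_indicator_const hH hS _), setIntegral_const, setIntegral_indicator_const hH,
    smul_eq_mul]
  ring

theorem pieceVal_baseDensity_eq_sub (hS : volume S ≠ ⊤) :
    pieceVal (baseDensity k) S =
      (1 + zoneUnit k) * volume.real S - 2 * zoneUnit k * volume.real (S \ bobZones k) := by
  rw [pieceVal_baseDensity hS, ← measureReal_inter_add_sdiff (measurableSet_bobZones k) hS]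
  ring

theorem pieceVal_bumpDensity (hS : volume S ≠ ⊤) :
    pieceVal (bumpDensity k a w) S = pieceVal (baseDensity k) S +
      (volume.real (S ∩ Ioo a (a + w)) - volume.real (S ∩ Ioo (a + w) (a + 2 * w))) / 2 := by
  have hbase := integrableOn_baseDensity (k := k) hS
  have hleft := integrableOn_indicator_const measurableSet_Ioo (B := Ioo a (a + w)) hS (1 / 2)
  have hright :=
    integrableOn_indicator_const measurableSet_Ioo (B := Ioo (a + w) (a + 2 * w)) hS (1 / 2)
  calc pieceVal (bumpDensity k a w) S
    _ = pieceVal (baseDensity k) S + (∫ x in S, (Ioo a (a + w)).indicator (fun _ => 1 / 2) x) -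
          ∫ x in S, (Ioo (a + w) (a + 2 * w)).indicator (fun _ => 1 / 2) x :=
      (integral_sub (hbase.add hleft) hright).trans <|
        congrArg (· - _) (integral_add hbase hleft)
    _ = _ := by
      rw [setIntegral_indicator_const measurableSet_Ioo,
        setIntegral_indicator_const measurableSet_Ioo]
      ring

theorem baseDensity_mem_Icc (hk : 0 < k) (x : ℝ) :
    baseDensity k x ∈ Icc (1 - zoneUnit k) (1 + zoneUnit k) := by
  have hκ := zoneUnit_pos hk
  simp only [baseDensity, indicator_apply]
  split_ifs <;> constructor <;> linarith

namespace IsSlot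

theorem nonneg (h : IsSlot k a w) (hk : 0 < k) : 0 ≤ a := by
  linarith [h.left_le, zoneUnit_pos hk]

theorem subset_bobZones (h : IsSlot k a w) (hk : 2 ≤ k) : Icc a (a + 2 * w) ⊆ bobZones k := by
  have hκ := zoneUnit_pos (by lia : 0 < k)
  have hzone := Icc_subset_altPiece (zoneCuts k) (by lia : 1 ≤ k)
  rw [extCuts_zoneCuts_one (by lia), extCuts_zoneCuts_two hk] at hzone
  exact (Icc_subset_Icc (by linarith [h.left_le]) h.right_le).trans hzone

theorem subset_Icc (h : IsSlot k a w) (hk : 2 ≤ k) : Icc a (a + 2 * w) ⊆ Icc 0 1 :=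
  (h.subset_bobZones hk).trans (bobZones_subset_Icc k)

theorem width_le (h : IsSlot k a w) : 8 * w ≤ zoneUnit k := by
  linarith [h.left_le, h.right_le]

theorem bumpDensity_mem_Icc (h : IsSlot k a w) (hk : 2 ≤ k) (x : ℝ) :
    bumpDensity k a w x ∈ Icc (1 / 2 : ℝ) 2 := by
  have hκ := zoneUnit_pos (by lia : 0 < k)
  have hκ₂ := zoneUnit_le_half (by lia : 0 < k)
  have hw := h.width_nonneg
  have hbase := baseDensity_mem_Icc (by lia : 0 < k) x
  have hzone := h.subset_bobZones hk
  simp only [bumpDensity, indicator_apply]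
  split_ifs with hl hr hr
  · exact absurd hr.1 hl.2.not_gt
  · constructor <;> linarith [hbase.1, hbase.2]
  · have hx : x ∈ bobZones k := hzone ⟨by linarith [hr.1], hr.2.le⟩
    rw [baseDensity, indicator_of_mem hx]
    constructor <;> linarith
  · constructor <;> linarith [hbase.1, hbase.2]

theorem volume_left (h : IsSlot k a w) : volume.real (Ioo a (a + w)) = w := by
  rw [Real.volume_real_Ioo_of_le (by linarith [h.width_nonneg]), add_sub_cancel_left]

theorem volume_right (h : IsSlot k a w) : volume.real (Ioo (a + w) (a + 2 * w)) = w := by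
  rw [Real.volume_real_Ioo_of_le (by linarith [h.width_nonneg])]
  ring

theorem volume_inter_right_le (h : IsSlot k a w) (S : Set ℝ) :
    volume.real (S ∩ Ioo (a + w) (a + 2 * w)) ≤ w :=
  (measureReal_mono inter_subset_right measure_Ioo_lt_top.ne).trans_eq h.volume_right

end IsSlot

theorem pieceVal_baseDensity_Icc (hk : 0 < k) : pieceVal (baseDensity k) (Icc 0 1) = 1 := by
  rw [pieceVal_baseDensity measure_Icc_lt_top.ne, inter_eq_right.2 (bobZones_subset_Icc k),
    volume_bobZones hk, Real.volume_real_Icc_of_le zero_le_one]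
  ring

theorem IsSlot.pieceVal_bumpDensity_Icc (h : IsSlot k a w) (hk : 2 ≤ k) :
    pieceVal (bumpDensity k a w) (Icc 0 1) = 1 := by
  have hw := h.width_nonneg
  have hsub := h.subset_Icc hk
  have hleft : Ioo a (a + w) ⊆ Icc 0 1 :=
    (Ioo_subset_Icc_self.trans (Icc_subset_Icc_right (by linarith))).trans hsub
  have hright : Ioo (a + w) (a + 2 * w) ⊆ Icc 0 1 :=
    (Ioo_subset_Icc_self.trans (Icc_subset_Icc_left (by linarith))).trans hsub
  rw [pieceVal_bumpDensity measure_Icc_lt_top.ne, pieceVal_baseDensity_Icc (by lia),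
    inter_eq_right.2 hleft, inter_eq_right.2 hright, h.volume_left, h.volume_right]
  ring

end Densities

section Rounds

variable {k : ℕ} {a w : ℝ} {S : Set ℝ} {y : Fin k → ℝ} {b : Bool}

theorem minShare_mul (hk : 0 < k) : minShare k * (1 + zoneUnit k) = 1 / 2 := by
  have hκ := zoneUnit_pos hk
  unfold minShare
  field_simp

theorem minShare_mem_Icc (hk : 0 < k) : minShare k ∈ Icc (1 / 4 : ℝ) (1 / 2) := by
  have hκ := zoneUnit_pos hk
  have hκ₂ := zoneUnit_le_half hk
  have hβ := minShare_mul hk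
  constructor <;> nlinarith

theorem minShare_le_volume (hk : 0 < k) (hS : volume S ≠ ⊤)
    (hval : 1 / 2 ≤ pieceVal (baseDensity k) S) : minShare k ≤ volume.real S := by
  have hκ := zoneUnit_pos hk
  rw [pieceVal_baseDensity_eq_sub hS] at hval
  have hout : 0 ≤ 2 * zoneUnit k * volume.real (S \ bobZones k) := by positivity
  refine le_of_mul_le_mul_right ?_ (by linarith : 0 < 1 + zoneUnit k)
  linarith [minShare_mul hk]

theorem volume_sdiff_bobZones_le (hk : 0 < k) (hS : volume S ≠ ⊤)
    (hval : 1 / 2 ≤ pieceVal (baseDensity k) S)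
    (hopt : volume.real S ≤ minShare k + zoneUnit k ^ 2 / 2) :
    volume.real (S \ bobZones k) ≤ 3 / 8 * zoneUnit k := by
  have hκ := zoneUnit_pos hk
  have hκ₂ := zoneUnit_le_half hk
  rw [pieceVal_baseDensity_eq_sub hS] at hval
  have hopt' := mul_le_mul_of_nonneg_right hopt (by linarith : 0 ≤ 1 + zoneUnit k)
  have hβ := minShare_mul hk
  refine le_of_mul_le_mul_left ?_ (by linarith : 0 < 2 * zoneUnit k)
  calc 2 * zoneUnit k * volume.real (S \ bobZones k)
    _ ≤ (1 + zoneUnit k) / 2 * zoneUnit k ^ 2 := by linarith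
    _ ≤ 3 / 4 * zoneUnit k ^ 2 := mul_le_mul_of_nonneg_right (by linarith) (sq_nonneg _)
    _ = 2 * zoneUnit k * (3 / 8 * zoneUnit k) := by ring

theorem volume_bobZones_sdiff_lt (hk : 0 < k) (hmeas : MeasurableSet S) (hS : volume S ≠ ⊤)
    (hval : 1 / 2 ≤ pieceVal (baseDensity k) S)
    (hopt : volume.real S ≤ minShare k + zoneUnit k ^ 2 / 2) :
    volume.real (bobZones k \ S) < zoneUnit k := by
  have hκ := zoneUnit_pos hk
  have hout := volume_sdiff_bobZones_le hk hS hval hopt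
  have hlow := minShare_le_volume hk hS hval
  have hSsplit := measureReal_inter_add_sdiff (s := S) (measurableSet_bobZones k) hS
  have hHsplit := measureReal_inter_add_sdiff hmeas (volume_bobZones_ne_top k)
  rw [inter_comm, volume_bobZones hk] at hHsplit
  have hβ : 1 / 2 - minShare k ≤ zoneUnit k / 2 := by
    nlinarith [minShare_mul hk, (minShare_mem_Icc hk).2]
  linarith

theorem ValidCuts.exists_mem_zoneCore (hy : ValidCuts k y) (hk : 0 < k)
    (hval : 1 / 2 ≤ pieceVal (baseDensity k) (altPiece k y b))
    (hopt : volume.real (altPiece k y b) ≤ minShare k + zoneUnit k ^ 2 / 2) {i : ℕ} (hi : i ≤ k) :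
    ∃ x ∈ zoneCore k i, x ∈ altPiece k y (xor b (decide (i % 2 = 0))) := by
  have hκ := zoneUnit_pos hk
  have hfin := hy.volume_altPiece_ne_top b
  have hcore := volume_zoneCore hk i
  by_contra! hmiss
  by_cases hpar : i % 2 = 0
  · simp only [hpar, decide_true, Bool.xor_true] at hmiss
    have hsub : zoneCore k i ⊆ altPiece k y b \ bobZones k := fun x hx =>
      ⟨(Icc_subset_altPiece_union y b (zoneCore_subset_Icc hk hi hx)).resolve_right (hmiss x hx),
        disjoint_left.1 (disjoint_zoneCore_bobZones hk hi hpar) hx⟩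
    have hle := measureReal_mono hsub (measure_ne_top_of_subset sdiff_subset hfin)
    linarith [volume_sdiff_bobZones_le hk hfin hval hopt]
  · simp only [hpar, decide_false, Bool.xor_false] at hmiss
    have hsub : zoneCore k i ⊆ bobZones k \ altPiece k y b := fun x hx =>
      ⟨zoneCore_subset_bobZones hk hi hpar hx, hmiss x hx⟩
    have hle := measureReal_mono hsub
      (measure_ne_top_of_subset sdiff_subset (volume_bobZones_ne_top k))
    linarith [volume_bobZones_sdiff_lt hk (measurableSet_altPiece y b) hfin hval hopt]

theorem ValidCuts.eq_false_and_extCuts_of_nearOptimal (hy : ValidCuts k y) (hk : 2 ≤ k)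
    (hval : 1 / 2 ≤ pieceVal (baseDensity k) (altPiece k y b))
    (hopt : volume.real (altPiece k y b) ≤ minShare k + zoneUnit k ^ 2 / 2) :
    b = false ∧ extCuts k y 1 < 2 * zoneUnit k ∧ 3 * zoneUnit k < extCuts k y 3 := by
  have hk₀ : 0 < k := by lia
  choose x hcore hmem using fun i : Fin (k + 1) =>
    hy.exists_mem_zoneCore hk₀ hval hopt (Nat.lt_succ_iff.1 i.isLt)
  have hx : StrictMono x := Fin.strictMono_iff_lt_succ.2 fun i =>
    (hcore i.castSucc).2.trans <|
      (extCuts_zoneCuts_add_le hk₀ i.castSucc.is_le).trans_lt (hcore i.succ).1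
  obtain ⟨hb, hcell⟩ := hy.eq_false_and_mem_Icc_of_alternating hx hmem
  refine ⟨hb, ?_, ?_⟩
  · have hlt := (hcore ⟨1, by lia⟩).2
    rw [extCuts_zoneCuts_one hk₀] at hlt
    linarith [(hcell ⟨1, by lia⟩).1]
  · have hlt := (hcore ⟨2, by lia⟩).1
    rw [extCuts_zoneCuts_two hk] at hlt
    linarith [(hcell ⟨2, by lia⟩).2]

/-- Bob's piece `S` meets `I` in an initial segment of `I`. -/
def IsInitialIn (I S : Set ℝ) : Prop := ∀ ⦃x z⦄, x ∈ I → z ∈ I → x ≤ z → z ∈ S → x ∈ S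

theorem isInitialIn_altPiece_of_forall_notMem (ha : 0 ≤ a)
    (hcut : ∀ i, y i ∉ Ioo a (a + 2 * w)) : IsInitialIn (Ioo a (a + 2 * w)) (altPiece k y b) := by
  intro x z hx hz hxz hzS
  obtain ⟨i, hi, hpar, hcell⟩ := mem_altPiece.1 hzS
  refine mem_altPiece.2 ⟨i, hi, hpar, not_lt.1 fun hlt => ?_, hxz.trans hcell.2⟩
  rcases i with _ | i
  · rw [extCuts_zero] at hlt
    linarith [hx.1]
  · rw [extCuts_succ y ⟨i, hi⟩] at hlt hcell
    exact hcut _ ⟨hx.1.trans hlt, hcell.1.trans_lt hz.2⟩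

theorem ValidCuts.isInitialIn_of_nearOptimal (hy : ValidCuts k y) (hk : 2 ≤ k) (h : IsSlot k a w)
    (hval : 1 / 2 ≤ pieceVal (baseDensity k) (altPiece k y b))
    (hopt : volume.real (altPiece k y b) ≤ minShare k + zoneUnit k ^ 2 / 2) :
    IsInitialIn (Ioo a (a + 2 * w)) (altPiece k y b) := by
  obtain ⟨rfl, hfirst, hthird⟩ := hy.eq_false_and_extCuts_of_nearOptimal hk hval hopt
  intro x z hx hz hxz hzS
  obtain ⟨i, hi, hpar, hcell⟩ := mem_altPiece.1 hzS
  have hi_lt : i < 3 := by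
    by_contra! h₃
    linarith [hy.monotone_extCuts h₃, hcell.1, hz.2, h.right_le]
  obtain rfl : i = 1 := by
    interval_cases i
    all_goals simp_all
  refine mem_altPiece.2 ⟨1, hi, hpar, ?_, hxz.trans hcell.2⟩
  linarith [hx.1, h.left_le, zoneUnit_pos (by lia : 0 < k)]

theorem IsInitialIn.volume_right_le (hS : IsInitialIn (Ioo a (a + 2 * w)) S) (h : IsSlot k a w) :
    volume.real (S ∩ Ioo (a + w) (a + 2 * w)) ≤ volume.real (S ∩ Ioo a (a + w)) := by
  have hw := h.width_nonneg
  rcases (S ∩ Ioo (a + w) (a + 2 * w)).eq_empty_or_nonempty with hempty | ⟨z, hzS, hz⟩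
  · rw [hempty, measureReal_empty]
    exact measureReal_nonneg
  · have hleft : Ioo a (a + w) ⊆ S := fun x hx =>
      hS ⟨hx.1, by linarith [hx.2]⟩ ⟨by linarith [hz.1], hz.2⟩ (hx.2.trans hz.1).le hzS
    rw [inter_eq_right.2 hleft, h.volume_left]
    exact h.volume_inter_right_le S

theorem IsInitialIn.pieceVal_baseDensity_le (hS : IsInitialIn (Ioo a (a + 2 * w)) S)
    (h : IsSlot k a w) (hfin : volume S ≠ ⊤) :
    pieceVal (baseDensity k) S ≤ pieceVal (bumpDensity k a w) S := by
  rw [pieceVal_bumpDensity hfin]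
  linarith [hS.volume_right_le h]

theorem IsSlot.pieceVal_baseDensity_sub_le (h : IsSlot k a w) (hfin : volume S ≠ ⊤) :
    pieceVal (baseDensity k) S - w / 2 ≤ pieceVal (bumpDensity k a w) S := by
  rw [pieceVal_bumpDensity hfin]
  linarith [h.volume_inter_right_le S, measureReal_nonneg (μ := volume) (s := S ∩ Ioo a (a + w))]

end Rounds

section Stackelberg

variable {k : ℕ} {a w : ℝ}

theorem pieceVal_one (S : Set ℝ) : pieceVal (fun _ => 1) S = volume.real S := by
  simp [pieceVal]

theorem ValidCuts.volume_altPiece_add {c : Fin k → ℝ} (hc : ValidCuts k c) (b : Bool) :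
    volume.real (altPiece k c b) + volume.real (altPiece k c !b) = 1 := by
  have hadd := hc.pieceVal_add (integrableOn_const (C := (1 : ℝ)) measure_Icc_lt_top.ne) b
  simpa only [pieceVal_one, Real.volume_real_Icc_of_le zero_le_one, sub_zero] using hadd

theorem volume_le_stackelbergValue {vB : ℝ → ℝ} {c : Fin k → ℝ} {b : Bool} (hc : ValidCuts k c)
    (hval : 1 / 2 ≤ pieceVal vB (altPiece k c !b)) :
    volume.real (altPiece k c b) ≤ stackelbergValue k (fun _ => 1) vB := by
  refine le_csSup ⟨1, ?_⟩ ⟨c, b, hc, hval, (pieceVal_one _).symm⟩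
  rintro u ⟨c', b', hc', -, rfl⟩
  rw [pieceVal_one]
  linarith [hc'.volume_altPiece_add b', measureReal_nonneg (μ := volume) (s := altPiece k c' !b')]

/-- Good cuts for Alice against `bumpDensity k a w`: the zone cuts with the first inner zone shrunk
so that it ends with the favoured interval `(a, a + w)` and Bob's zones retain length
`(1 - w) * minShare k`. -/
def stackelbergCuts (k : ℕ) (a w : ℝ) : Fin k → ℝ := fun i =>
  if i.val = 0 then a + w - 2 * zoneUnit k + (1 / 2 - (1 - w) * minShare k)
  else if i.val = 1 then a + w else zoneCuts k i

theorem extCuts_stackelbergCuts_one (hk : 2 ≤ k) : extCuts k (stackelbergCuts k a w) 1 =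
    a + w - 2 * zoneUnit k + (1 / 2 - (1 - w) * minShare k) :=
  extCuts_succ _ ⟨0, by lia⟩

theorem IsSlot.extCuts_stackelbergCuts_one_mem_Icc (h : IsSlot k a w) (hk : 2 ≤ k) :
    extCuts k (stackelbergCuts k a w) 1 ∈ Icc (zoneUnit k) a := by
  have hκ := zoneUnit_pos (by lia : 0 < k)
  have hβ := minShare_mem_Icc (by lia : 0 < k)
  have hβκ := minShare_mul (by lia : 0 < k)
  have hw := h.width_nonneg
  rw [extCuts_stackelbergCuts_one hk]
  constructor
  · nlinarith [h.left_le, hβ.1]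
  · nlinarith [h.width_le, hβ.2]

theorem extCuts_stackelbergCuts_two (hk : 2 ≤ k) : extCuts k (stackelbergCuts k a w) 2 = a + w :=
  extCuts_succ (stackelbergCuts k a w) ⟨1, hk⟩

theorem extCuts_stackelbergCuts_of_three_le {i : ℕ} (hi : 3 ≤ i) :
    extCuts k (stackelbergCuts k a w) i = extCuts k (zoneCuts k) i := by
  obtain ⟨i, rfl⟩ := Nat.exists_eq_add_of_le' hi
  rcases Nat.lt_or_ge (i + 2) k with h | h
  · rw [extCuts_succ _ ⟨i + 2, h⟩, extCuts_succ _ ⟨i + 2, h⟩]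
    simp [stackelbergCuts]
  · rw [extCuts_eq_one _ (by lia), extCuts_eq_one _ (by lia)]

namespace IsSlot

theorem validCuts_stackelbergCuts (h : IsSlot k a w) (hk : 2 ≤ k) :
    ValidCuts k (stackelbergCuts k a w) := by
  have hκ := zoneUnit_pos (by lia : 0 < k)
  have hfirst := h.extCuts_stackelbergCuts_one_mem_Icc hk
  refine validCuts_of_forall_extCuts_le fun i hi => ?_
  match i with
  | 0 => exact (extCuts_zero _).trans_le (hκ.le.trans hfirst.1)
  | 1 =>
    rw [extCuts_stackelbergCuts_two hk]
    linarith [hfirst.2, h.width_nonneg]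
  | 2 =>
    have hzone := extCuts_zoneCuts_add_le (by lia) hi
    rw [extCuts_zoneCuts_two hk] at hzone
    rw [extCuts_stackelbergCuts_two hk, extCuts_stackelbergCuts_of_three_le le_rfl]
    linarith [h.right_le, h.width_nonneg]
  | i + 3 =>
    rw [extCuts_stackelbergCuts_of_three_le (by lia), extCuts_stackelbergCuts_of_three_le (by lia)]
    exact (validCuts_zoneCuts k).monotone_extCuts (i + 3).le_succ

theorem volume_altPiece_stackelbergCuts (h : IsSlot k a w) (hk : 2 ≤ k) :
    volume.real (altPiece k (stackelbergCuts k a w) false) = (1 - w) * minShare k := by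
  have hmem : 1 ∈ Finset.range (k + 1) := Finset.mem_range.2 (by lia)
  have hzones := volume_bobZones (by lia : 0 < k)
  rw [bobZones, (validCuts_zoneCuts k).volume_altPiece, ← Finset.add_sum_erase _ _ hmem,
    extCuts_zoneCuts_one (by lia), extCuts_zoneCuts_two hk] at hzones
  rw [(h.validCuts_stackelbergCuts hk).volume_altPiece, ← Finset.add_sum_erase _ _ hmem,
    extCuts_stackelbergCuts_two hk, extCuts_stackelbergCuts_one hk]
  have hrest : ∀ i ∈ (Finset.range (k + 1)).erase 1,
      (if decide (i % 2 = 0) = false then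
        extCuts k (stackelbergCuts k a w) (i + 1) - extCuts k (stackelbergCuts k a w) i else 0) =
      if decide (i % 2 = 0) = false then
        extCuts k (zoneCuts k) (i + 1) - extCuts k (zoneCuts k) i else 0 := by
    intro i hi
    refine ite_congr rfl (fun hodd => ?_) fun _ => rfl
    have hi₁ := Finset.ne_of_mem_erase hi
    rw [extCuts_stackelbergCuts_of_three_le (by lia), extCuts_stackelbergCuts_of_three_le (by lia)]
  rw [Finset.sum_congr rfl hrest]
  simp only [Nat.mod_eq_of_lt Nat.one_lt_two, one_ne_zero, decide_false, if_true] at hzones ⊢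
  linarith

theorem altPiece_stackelbergCuts_subset (h : IsSlot k a w) (hk : 2 ≤ k) :
    altPiece k (stackelbergCuts k a w) false ⊆ bobZones k := by
  intro x hx
  obtain ⟨i, hi, hpar, hcell⟩ := mem_altPiece.1 hx
  refine mem_altPiece.2 ⟨i, hi, hpar, ?_⟩
  match i with
  | 0 | 2 => simp at hpar
  | 1 =>
    rw [extCuts_stackelbergCuts_two hk] at hcell
    rw [extCuts_zoneCuts_one (by lia), extCuts_zoneCuts_two hk]
    exact ⟨(h.extCuts_stackelbergCuts_one_mem_Icc hk).1.trans hcell.1,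
      by linarith [hcell.2, h.right_le, h.width_nonneg]⟩
  | i + 3 =>
    rwa [extCuts_stackelbergCuts_of_three_le (by lia),
      extCuts_stackelbergCuts_of_three_le (by lia)] at hcell

theorem left_subset_altPiece_stackelbergCuts (h : IsSlot k a w) (hk : 2 ≤ k) :
    Ioo a (a + w) ⊆ altPiece k (stackelbergCuts k a w) false := by
  refine Subset.trans ?_ (Icc_subset_altPiece (stackelbergCuts k a w) (by lia : 1 ≤ k))
  rw [extCuts_stackelbergCuts_two hk]
  exact Ioo_subset_Icc_self.trans (Icc_subset_Icc_left (h.extCuts_stackelbergCuts_one_mem_Icc hk).2)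

theorem disjoint_altPiece_stackelbergCuts_right (h : IsSlot k a w) (hk : 2 ≤ k) :
    Disjoint (altPiece k (stackelbergCuts k a w) false) (Ioo (a + w) (a + 2 * w)) := by
  have hκ := zoneUnit_pos (by lia : 0 < k)
  have hdisj := (h.validCuts_stackelbergCuts hk).disjoint_Ioo_altPiece 2
  have hzone := extCuts_zoneCuts_add_le (by lia) hk
  rw [extCuts_zoneCuts_two hk] at hzone
  rw [extCuts_stackelbergCuts_two hk, extCuts_stackelbergCuts_of_three_le le_rfl] at hdisj
  exact (hdisj.mono_left (Ioo_subset_Ioo_right (by linarith [h.right_le]))).symm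

theorem pieceVal_altPiece_stackelbergCuts (h : IsSlot k a w) (hk : 2 ≤ k) :
    pieceVal (bumpDensity k a w) (altPiece k (stackelbergCuts k a w) false) = 1 / 2 := by
  have hfin := (h.validCuts_stackelbergCuts hk).volume_altPiece_ne_top false
  rw [pieceVal_bumpDensity hfin, pieceVal_baseDensity hfin,
    inter_eq_left.2 (h.altPiece_stackelbergCuts_subset hk),
    inter_eq_right.2 (h.left_subset_altPiece_stackelbergCuts hk),
    (h.disjoint_altPiece_stackelbergCuts_right hk).inter_eq, measureReal_empty,
    h.volume_altPiece_stackelbergCuts hk, h.volume_left]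
  linear_combination (1 - w) * minShare_mul (by lia : 0 < k)

theorem le_stackelbergValue (h : IsSlot k a w) (hk : 2 ≤ k) :
    1 - (1 - w) * minShare k ≤ stackelbergValue k (fun _ => 1) (bumpDensity k a w) := by
  have hc := h.validCuts_stackelbergCuts hk
  have hadd := hc.volume_altPiece_add true
  rw [Bool.not_true, h.volume_altPiece_stackelbergCuts hk] at hadd
  refine (eq_sub_of_add_eq hadd).ge.trans (volume_le_stackelbergValue hc ?_)
  exact (h.pieceVal_altPiece_stackelbergCuts hk).ge

end IsSlot

end Stackelberg

section Learning

open scoped Finset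

theorem exists_card_hit_mul_card_le {ι J κ α : Type*} [Fintype J] [Nonempty J] [Fintype κ]
    (B : Finset ι) (y : ι → κ → α) {I : J → Set α} (hI : Pairwise (Function.onFun Disjoint I)) :
    ∃ j, #{t ∈ B | ∃ i, y t i ∈ I j} * Fintype.card J ≤ Fintype.card κ * #B := by
  have hround : ∀ t ∈ B, #{j | ∃ i, y t i ∈ I j} ≤ Fintype.card κ := fun t _ =>
    Finset.card_le_card_of_forall_subsingleton (fun j i => y t i ∈ I j)
      (fun j hj => by simpa using hj)
      fun i _ j hj j' hj' => hI.eq (Set.not_disjoint_iff.2 ⟨y t i, hj.2, hj'.2⟩)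
  have hcount : ∑ j, #{t ∈ B | ∃ i, y t i ∈ I j} ≤ Fintype.card κ * #B :=
    calc ∑ j, #{t ∈ B | ∃ i, y t i ∈ I j}
      _ = ∑ t ∈ B, #{j | ∃ i, y t i ∈ I j} :=
        Finset.sum_card_bipartiteAbove_eq_sum_card_bipartiteBelow fun j t => ∃ i, y t i ∈ I j
      _ ≤ #B * Fintype.card κ := Finset.sum_le_card_nsmul _ _ _ hround
      _ = _ := mul_comm _ _
  obtain ⟨j, -, hj⟩ := Finset.exists_le_of_sum_le (Finset.univ_nonempty (α := J))
    (f := fun j => #{t ∈ B | ∃ i, y t i ∈ I j} * Fintype.card J)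
    (g := fun _ => Fintype.card κ * #B) (by
      rw [← Finset.sum_mul, Finset.sum_const, Finset.card_univ, smul_eq_mul, mul_comm]
      exact Nat.mul_le_mul_left _ hcount)
  exact ⟨j, hj⟩

variable {k : ℕ} {a w : ℝ} {c : Fin k → ℝ}

/-- Bob's regret in a single round, when facing the cuts `c` and choosing the piece `b`. -/
def roundRegret (k : ℕ) (v : ℝ → ℝ) (c : Fin k → ℝ) (b : Bool) : ℝ :=
  max (pieceVal v (altPiece k c true)) (pieceVal v (altPiece k c false)) -
    pieceVal v (altPiece k c b)

/-- Bob's choice: a piece of base value at least `1 / 2`, whatever his actual density is, so that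
it reveals nothing about the bump. -/
def baseChoice (k : ℕ) (c : Fin k → ℝ) : Bool :=
  decide (1 / 2 ≤ pieceVal (baseDensity k) (altPiece k c true))

/-- The piece that `baseChoice` selects. -/
def bobPiece (k : ℕ) (c : Fin k → ℝ) : Set ℝ := altPiece k c (baseChoice k c)

/-- The first `T` rounds in which Bob's piece is longer than `minShare k` by a margin. Only in
these rounds can Alice probe where Bob's density deviates from the base density. -/
def probingRounds (k : ℕ) (y : ℕ → Fin k → ℝ) (T : ℕ) : Finset ℕ :=
  {t ∈ Finset.range T | minShare k + zoneUnit k ^ 2 / 2 < volume.real (bobPiece k (y t))}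

theorem ValidCuts.roundRegret_le {v : ℝ → ℝ} (hc : ValidCuts k c)
    (hv : IntegrableOn v (Icc 0 1)) (htotal : pieceVal v (Icc 0 1) = 1) {b : Bool} {ρ : ℝ}
    (hρ : 0 ≤ ρ) (hval : 1 / 2 - ρ ≤ pieceVal v (altPiece k c b)) :
    roundRegret k v c b ≤ 2 * ρ := by
  have hadd := (hc.pieceVal_add hv b).trans htotal
  rw [roundRegret, sub_le_iff_le_add]
  cases b <;> rw [max_le_iff] <;> simp only [Bool.not_true, Bool.not_false] at hadd <;>
    constructor <;> linarith

theorem ValidCuts.half_le_pieceVal_bobPiece (hc : ValidCuts k c) (hk : 0 < k) :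
    1 / 2 ≤ pieceVal (baseDensity k) (bobPiece k c) := by
  have hadd := (hc.pieceVal_add (integrableOn_baseDensity measure_Icc_lt_top.ne) true).trans
    (pieceVal_baseDensity_Icc hk)
  by_cases h : 1 / 2 ≤ pieceVal (baseDensity k) (altPiece k c true)
  · rwa [bobPiece, baseChoice, decide_eq_true h]
  · rw [bobPiece, baseChoice, decide_eq_false h]
    rw [Bool.not_true] at hadd
    linarith

namespace IsSlot

theorem roundRegret_le_width (h : IsSlot k a w) (hk : 2 ≤ k) (hc : ValidCuts k c) :
    roundRegret k (bumpDensity k a w) c (baseChoice k c) ≤ w := by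
  have hval := h.pieceVal_baseDensity_sub_le (hc.volume_altPiece_ne_top (baseChoice k c))
  have hbase := hc.half_le_pieceVal_bobPiece (by lia)
  refine (hc.roundRegret_le (integrableOn_bumpDensity measure_Icc_lt_top.ne)
    (h.pieceVal_bumpDensity_Icc hk) (by linarith [h.width_nonneg] : 0 ≤ w / 2) ?_).trans_eq
    (by ring)
  rw [bobPiece] at hbase
  linarith

theorem roundRegret_nonpos (h : IsSlot k a w) (hk : 2 ≤ k) (hc : ValidCuts k c)
    (hinit : IsInitialIn (Ioo a (a + 2 * w)) (bobPiece k c)) :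
    roundRegret k (bumpDensity k a w) c (baseChoice k c) ≤ 0 := by
  have hval := hinit.pieceVal_baseDensity_le h (hc.volume_altPiece_ne_top (baseChoice k c))
  have hbase := hc.half_le_pieceVal_bobPiece (by lia)
  refine (hc.roundRegret_le (integrableOn_bumpDensity measure_Icc_lt_top.ne)
    (h.pieceVal_bumpDensity_Icc hk) le_rfl ?_).trans_eq (mul_zero 2)
  rw [sub_zero]
  exact hbase.trans hval

variable {y : ℕ → Fin k → ℝ}

theorem sum_roundRegret_le (h : IsSlot k a w) (hk : 2 ≤ k) (hy : ∀ t, ValidCuts k (y t)) (T : ℕ) :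
    ∑ t ∈ Finset.range T, roundRegret k (bumpDensity k a w) (y t) (baseChoice k (y t)) ≤
      #{t ∈ probingRounds k y T | ∃ i, y t i ∈ Ioo a (a + 2 * w)} * w := by
  rw [probingRounds, Finset.filter_filter, ← nsmul_eq_mul, ← Finset.sum_const, Finset.sum_filter]
  refine Finset.sum_le_sum fun t _ => ?_
  split_ifs with hhit
  · exact h.roundRegret_le_width hk (hy t)
  · refine h.roundRegret_nonpos hk (hy t) ?_
    rcases not_and_or.1 hhit with hopt | hcut
    · exact (hy t).isInitialIn_of_nearOptimal hk h ((hy t).half_le_pieceVal_bobPiece (by lia))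
        (not_lt.1 hopt)
    · exact isInitialIn_altPiece_of_forall_notMem (h.nonneg (by lia)) (not_exists.1 hcut)

theorem le_sum_stackelbergValue_sub (h : IsSlot k a w) (hk : 2 ≤ k)
    (hy : ∀ t, ValidCuts k (y t)) (T : ℕ) :
    T * (w * minShare k) + #(probingRounds k y T) * (zoneUnit k ^ 2 / 2) ≤
      ∑ t ∈ Finset.range T, (stackelbergValue k (fun _ => 1) (bumpDensity k a w) -
        volume.real (altPiece k (y t) !baseChoice k (y t))) := by
  have hsum : T * (w * minShare k) + #(probingRounds k y T) * (zoneUnit k ^ 2 / 2) =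
      ∑ t ∈ Finset.range T, (w * minShare k +
        if minShare k + zoneUnit k ^ 2 / 2 < volume.real (bobPiece k (y t))
          then zoneUnit k ^ 2 / 2 else 0) := by
    rw [Finset.sum_add_distrib, ← Finset.sum_filter, Finset.sum_const, Finset.sum_const,
      Finset.card_range, nsmul_eq_mul, nsmul_eq_mul, probingRounds]
  rw [hsum]
  refine Finset.sum_le_sum fun t _ => ?_
  have hstack := h.le_stackelbergValue hk
  have hadd := (hy t).volume_altPiece_add (baseChoice k (y t))
  have hshare : minShare k ≤ volume.real (bobPiece k (y t)) :=
    minShare_le_volume (by lia) ((hy t).volume_altPiece_ne_top _)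
      ((hy t).half_le_pieceVal_bobPiece (by lia))
  rw [← bobPiece] at hadd
  split_ifs <;> linarith

end IsSlot

/-- The common width of the two halves of each of `N` consecutive slots. -/
def slotWidth (k N : ℕ) : ℝ := zoneUnit k / (8 * N)

/-- The left end of the `j`-th of `N` consecutive slots. -/
def slotStart (k N j : ℕ) : ℝ := 11 / 4 * zoneUnit k + j * (2 * slotWidth k N)

theorem slotStart_succ (k N j : ℕ) :
    slotStart k N (j + 1) = slotStart k N j + 2 * slotWidth k N := by
  simp only [slotStart]
  push_cast
  ring

theorem slotWidth_nonneg (k N : ℕ) : 0 ≤ slotWidth k N := by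
  unfold slotWidth zoneUnit; positivity

theorem monotone_slotStart (k N : ℕ) : Monotone (slotStart k N) :=
  monotone_nat_of_le_succ fun j => by
    linarith [slotStart_succ k N j, slotWidth_nonneg k N]

theorem isSlot_slotStart (k : ℕ) {N j : ℕ} (hj : j < N) :
    IsSlot k (slotStart k N j) (slotWidth k N) where
  left_le := by
    have := slotWidth_nonneg k N
    exact le_add_of_nonneg_right (by positivity)
  width_nonneg := slotWidth_nonneg k N
  right_le := by
    have hN : (N : ℝ) ≠ 0 := Nat.cast_ne_zero.2 (by lia)
    rw [← slotStart_succ]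
    refine (monotone_slotStart k N hj).trans_eq ?_
    rw [slotStart, slotWidth]
    field_simp
    ring

theorem pairwise_disjoint_slots (k N : ℕ) : Pairwise (Function.onFun Disjoint fun j : Fin N =>
    Ioo (slotStart k N j) (slotStart k N j + 2 * slotWidth k N)) := by
  simp only [← slotStart_succ]
  exact (monotone_slotStart k N).pairwise_disjoint_on_Ioo_succ.comp_of_injective Fin.val_injective

theorem mul_slotWidth_le (hk : 0 < k) {N : ℕ} (hN : 0 < N) {hits probes T : ℝ}
    (hT : 0 ≤ T) (hhits : hits * N ≤ k * probes)
    (hprobes : probes * (zoneUnit k ^ 2 / 2) ≤ T * (slotWidth k N * minShare k)) :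
    hits * slotWidth k N ≤ k * T / (64 * N ^ 3) := by
  have hk₀ : (0 : ℝ) < k := by exact_mod_cast hk
  have hκ := zoneUnit_pos hk
  have hprobes' : probes ≤ k * T / (4 * N) := by
    refine le_of_mul_le_mul_right (hprobes.trans ?_) (by positivity : 0 < zoneUnit k ^ 2 / 2)
    calc T * (slotWidth k N * minShare k)
      _ ≤ T * (slotWidth k N * (1 / 2)) :=
        mul_le_mul_of_nonneg_left (mul_le_mul_of_nonneg_left (minShare_mem_Icc hk).2
          (slotWidth_nonneg k N)) hT
      _ = _ := by
        rw [slotWidth, zoneUnit]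
        field_simp
        ring
  calc hits * slotWidth k N
    _ = hits * N * (1 / (16 * k * N ^ 2)) := by
      rw [slotWidth, zoneUnit]
      field_simp
      ring
    _ ≤ k * (k * T / (4 * N)) * (1 / (16 * k * N ^ 2)) :=
      mul_le_mul_of_nonneg_right (hhits.trans (mul_le_mul_of_nonneg_left hprobes' hk₀.le))
        (by positivity)
    _ = _ := by
      field_simp
      ring

/-- If Alice probes a lot, she pays for it even when there is no bump; if she probes little, then
she misses one of the slots. -/
theorem exists_slot_forall_regret (hk : 2 ≤ k) {y : ℕ → Fin k → ℝ} (hy : ∀ t, ValidCuts k (y t))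
    (T : ℕ) {N : ℕ} (hN : 0 < N) :
    ∃ a w, IsSlot k a w ∧
      ∑ t ∈ Finset.range T, roundRegret k (bumpDensity k a w) (y t) (baseChoice k (y t)) ≤
        k * T / (64 * N ^ 3) ∧
      T / (64 * k * N) ≤ ∑ t ∈ Finset.range T, (stackelbergValue k (fun _ => 1)
        (bumpDensity k a w) - volume.real (altPiece k (y t) !baseChoice k (y t))) := by
  have hk₀ : 0 < k := by lia
  have hκ := zoneUnit_pos hk₀
  have hβ := minShare_mem_Icc hk₀
  have hw := slotWidth_nonneg k N
  have hgain : (T : ℝ) / (64 * k * N) ≤ T * (slotWidth k N * minShare k) := by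
    calc (T : ℝ) / (64 * k * N) = T * (slotWidth k N * (1 / 4)) := by
          rw [slotWidth, zoneUnit]
          field_simp
          ring
      _ ≤ _ := by gcongr; exact hβ.1
  rcases le_or_gt (T * (slotWidth k N * minShare k))
    (#(probingRounds k y T) * (zoneUnit k ^ 2 / 2)) with hmany | hfew
  · have hslot : IsSlot k (3 * zoneUnit k) 0 := ⟨by linarith, le_rfl, by linarith⟩
    refine ⟨_, _, hslot, (hslot.sum_roundRegret_le hk hy T).trans ?_, ?_⟩
    · rw [mul_zero]
      positivity
    · refine (hgain.trans hmany).trans (le_trans ?_ (hslot.le_sum_stackelbergValue_sub hk hy T))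
      rw [zero_mul, mul_zero, zero_add]
  · have : Nonempty (Fin N) := ⟨⟨0, hN⟩⟩
    obtain ⟨j, hj⟩ := exists_card_hit_mul_card_le (probingRounds k y T) y
      (pairwise_disjoint_slots k N)
    rw [Fintype.card_fin, Fintype.card_fin] at hj
    have hslot := isSlot_slotStart k j.isLt
    refine ⟨_, _, hslot, (hslot.sum_roundRegret_le hk hy T).trans ?_,
      hgain.trans (le_trans (le_add_of_nonneg_right (by positivity))
        (hslot.le_sum_stackelbergValue_sub hk hy T))⟩
    exact mul_slotWidth_le hk₀ hN T.cast_nonneg (by exact_mod_cast hj) hfew.le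

end Learning

section Normalization

variable {v : ℝ → ℝ}

theorem exists_orderIso_eq_integral (hint : ∀ a b, IntervalIntegrable v volume a b) {m : ℝ}
    (hm : 0 < m) (hvm : ∀ x, m ≤ v x) : ∃ F : ℝ ≃o ℝ, ∀ x, F x = ∫ t in 0..x, v t := by
  let P : ℝ → ℝ := fun x => ∫ t in 0..x, v t
  have hP₀ : P 0 = 0 := intervalIntegral.integral_same
  have hlower : ∀ a b, a ≤ b → m * (b - a) ≤ P b - P a := fun a b hab => by
    rw [intervalIntegral.integral_interval_sub_left (hint 0 b) (hint 0 a), mul_comm,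
      ← smul_eq_mul, ← intervalIntegral.integral_const]
    exact intervalIntegral.integral_mono_on hab intervalIntegrable_const (hint a b)
      fun x _ => hvm x
  have hmono : StrictMono P := fun a b hab =>
    sub_pos.1 ((mul_pos hm (sub_pos.2 hab)).trans_le (hlower a b hab.le))
  have hsurj : Function.Surjective P := by
    refine (intervalIntegral.continuous_primitive hint 0).surjective ?_ ?_
    · refine Filter.tendsto_atTop_mono' _ ?_ (Filter.tendsto_id.const_mul_atTop hm)
      filter_upwards [Filter.eventually_ge_atTop 0] with x hx
      simpa [hP₀] using hlower 0 x hx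
    · refine Filter.tendsto_atBot_mono' _ ?_ (Filter.tendsto_id.const_mul_atBot hm)
      filter_upwards [Filter.eventually_le_atBot 0] with x hx
      simpa [hP₀] using hlower x 0 hx
  exact ⟨hmono.orderIsoOfSurjective P hsurj, fun _ => rfl⟩

theorem measurePreserving_of_eq_integral (hint : ∀ a b, IntervalIntegrable v volume a b)
    (hv : ∀ x, 0 ≤ v x) {F : ℝ ≃o ℝ} (hF : ∀ x, F x = ∫ t in 0..x, v t) :
    MeasurePreserving F (volume.withDensity fun x => ENNReal.ofReal (v x)) volume := by
  refine ⟨F.continuous.measurable, (Real.measure_ext_Ioo_rat fun a b => ?_).symm⟩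
  rw [Measure.map_apply F.continuous.measurable measurableSet_Ioo, F.preimage_Ioo,
    withDensity_apply _ measurableSet_Ioo, Real.volume_Ioo]
  rcases le_or_gt (b : ℝ) a with hab | hab
  · rw [Ioo_eq_empty (F.symm.monotone hab).not_gt, Measure.restrict_empty, lintegral_zero_measure,
      ENNReal.ofReal_of_nonpos (sub_nonpos.2 hab)]
  · have hsymm := F.symm.monotone hab.le
    rw [← ofReal_integral_eq_lintegral_ofReal
        ((intervalIntegrable_iff_integrableOn_Ioo_of_le hsymm).1 (hint _ _))
        (Filter.Eventually.of_forall hv),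
      ← integral_Ioc_eq_integral_Ioo, ← intervalIntegral.integral_of_le hsymm,
      ← intervalIntegral.integral_interval_sub_left (hint 0 _) (hint 0 _), ← hF, ← hF,
      F.apply_symm_apply, F.apply_symm_apply]

theorem intervalIntegrable_of_forall_mem_Icc (hv : Measurable v) {m M : ℝ}
    (hbounds : ∀ x, v x ∈ Icc m M) (a b : ℝ) : IntervalIntegrable v volume a b :=
  (intervalIntegrable_const (c := max |m| |M|)).mono_fun' hv.aestronglyMeasurable <|
    Filter.Eventually.of_forall fun x => abs_le_max_abs_abs (hbounds x).1 (hbounds x).2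

/-- A change of variable of the cake that turns `v` into the uniform density. -/
structure IsNormalization (v : ℝ → ℝ) (F : ℝ ≃o ℝ) : Prop where
  map_zero : F 0 = 0
  map_one : F 1 = 1
  pieceVal_preimage : ∀ (g : ℝ → ℝ) ⦃S : Set ℝ⦄, MeasurableSet S → S ⊆ Icc 0 1 →
    pieceVal (fun x => v x * g (F x)) (F ⁻¹' S) = pieceVal g S

theorem IsValueDensity.exists_isNormalization {δ Δ : ℝ} (hδ : 0 < δ) (hv : IsValueDensity δ Δ v) :
    ∃ F, IsNormalization v F := by
  obtain ⟨hmeas, hbounds, htotal⟩ := hv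
  let u : ℝ → ℝ := (Icc 0 1).piecewise v fun _ => 1
  have hu : Measurable u := hmeas.piecewise measurableSet_Icc measurable_const
  have huv : EqOn u v (Icc 0 1) := piecewise_eqOn _ _ _
  have hu_bounds : ∀ x, u x ∈ Icc (min δ 1) (max Δ 1) := fun x => by
    by_cases hx : x ∈ Icc (0 : ℝ) 1
    · rw [huv hx]
      exact Icc_subset_Icc (min_le_left _ _) (le_max_left _ _) (hbounds x hx)
    · simp only [u, piecewise_eq_of_notMem _ _ _ hx]
      exact ⟨min_le_right _ _, le_max_right _ _⟩
  have hu_pos : ∀ x, 0 < u x := fun x => (lt_min hδ one_pos).trans_le (hu_bounds x).1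
  have hint := intervalIntegrable_of_forall_mem_Icc hu hu_bounds
  obtain ⟨F, hF⟩ := exists_orderIso_eq_integral hint (lt_min hδ one_pos) fun x => (hu_bounds x).1
  have hF₀ : F 0 = 0 := (hF 0).trans intervalIntegral.integral_same
  have hF₁ : F 1 = 1 := by
    rw [hF, intervalIntegral.integral_of_le zero_le_one, ← integral_Icc_eq_integral_Ioc,
      setIntegral_congr_fun measurableSet_Icc huv, htotal]
  refine ⟨F, hF₀, hF₁, fun g S hS hSub => ?_⟩
  have hS' : MeasurableSet (F ⁻¹' S) := F.continuous.measurable hS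
  have hSub' : F ⁻¹' S ⊆ Icc 0 1 := fun x hx => by
    have := hSub hx
    rwa [← hF₀, ← hF₁, mem_Icc, F.le_iff_le, F.le_iff_le] at this
  calc ∫ x in F ⁻¹' S, v x * g (F x)
    _ = ∫ x in F ⁻¹' S, (ENNReal.ofReal (u x)).toReal • g (F x) :=
      setIntegral_congr_fun hS' fun x hx => by
        simp only [ENNReal.toReal_ofReal (hu_pos x).le]
        rw [huv (hSub' hx), smul_eq_mul]
    _ = ∫ x in F ⁻¹' S, g (F x) ∂(volume.withDensity fun x => ENNReal.ofReal (u x)) :=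
      (setIntegral_withDensity_eq_setIntegral_toReal_smul hu.ennreal_ofReal
        (Filter.Eventually.of_forall fun _ => ENNReal.ofReal_lt_top) _ hS').symm
    _ = ∫ x in S, g x :=
      (measurePreserving_of_eq_integral hint (fun x => (hu_pos x).le) hF).setIntegral_preimage_emb
        F.toHomeomorph.measurableEmbedding g S

namespace IsNormalization

variable {F : ℝ ≃o ℝ} {k : ℕ} {c : Fin k → ℝ}

theorem extCuts_comp (hF : IsNormalization v F) (c : Fin k → ℝ) (i : ℕ) :
    extCuts k (F ∘ c) i = F (extCuts k c i) := by
  simp only [extCuts, Function.comp_apply]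
  split_ifs
  exacts [hF.map_zero.symm, rfl, hF.map_one.symm]

theorem preimage_altPiece (hF : IsNormalization v F) (c : Fin k → ℝ) (b : Bool) :
    F ⁻¹' altPiece k (F ∘ c) b = altPiece k c b := by
  ext x
  simp only [mem_preimage, mem_altPiece, hF.extCuts_comp, mem_Icc, F.le_iff_le]

theorem validCuts_comp_iff (hF : IsNormalization v F) :
    ValidCuts k (F ∘ c) ↔ ValidCuts k c := by
  refine and_congr ⟨fun h i j hij => F.le_iff_le.1 (h hij), F.monotone.comp⟩
    (forall_congr' fun i => ?_)
  rw [← hF.map_zero, ← hF.map_one, Function.comp_apply, mem_Icc, F.le_iff_le, F.le_iff_le,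
    hF.map_zero, hF.map_one, mem_Icc]

theorem pieceVal_altPiece (hF : IsNormalization v F) (hc : ValidCuts k c) (g : ℝ → ℝ) (b : Bool) :
    pieceVal (fun x => v x * g (F x)) (altPiece k c b) = pieceVal g (altPiece k (F ∘ c) b) := by
  rw [← hF.preimage_altPiece, hF.pieceVal_preimage g (measurableSet_altPiece _ _)
    ((hF.validCuts_comp_iff.2 hc).altPiece_subset_Icc b)]

theorem pieceVal_altPiece_self (hF : IsNormalization v F) (hc : ValidCuts k c) (b : Bool) :
    pieceVal v (altPiece k c b) = volume.real (altPiece k (F ∘ c) b) := by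
  simpa only [mul_one, pieceVal_one] using hF.pieceVal_altPiece hc (fun _ => 1) b

theorem stackelbergValue_eq (hF : IsNormalization v F) (g : ℝ → ℝ) :
    stackelbergValue k v (fun x => v x * g (F x)) = stackelbergValue k (fun _ => 1) g := by
  refine congrArg sSup (Set.ext fun u => ⟨?_, ?_⟩)
  · rintro ⟨c, b, hc, hval, rfl⟩
    rw [hF.pieceVal_altPiece hc] at hval
    refine ⟨F ∘ c, b, hF.validCuts_comp_iff.2 hc, hval, ?_⟩
    rw [hF.pieceVal_altPiece_self hc, pieceVal_one]
  · rintro ⟨c, b, hc, hval, rfl⟩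
    obtain ⟨c, rfl⟩ : ∃ c', F ∘ c' = c := ⟨F.symm ∘ c, by ext; simp⟩
    rw [hF.validCuts_comp_iff] at hc
    rw [← hF.pieceVal_altPiece hc] at hval
    refine ⟨c, b, hc, hval, ?_⟩
    rw [hF.pieceVal_altPiece_self hc, pieceVal_one]

theorem isValueDensity_mul_comp {δ Δ : ℝ} (hF : IsNormalization v F) (hδ : 0 ≤ δ)
    (hv : IsValueDensity δ Δ v) {g : ℝ → ℝ} (hg : Measurable g)
    {m M : ℝ} (hm : 0 ≤ m) (hbounds : ∀ x, g x ∈ Icc m M) (htotal : pieceVal g (Icc 0 1) = 1) :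
    IsValueDensity (δ * m) (Δ * M) fun x => v x * g (F x) := by
  refine ⟨hv.1.mul (hg.comp F.continuous.measurable), fun x hx => ?_, ?_⟩
  · have hvx := hv.2.1 x hx
    have hgx := hbounds (F x)
    exact ⟨mul_le_mul hvx.1 hgx.1 hm (hδ.trans hvx.1),
      mul_le_mul hvx.2 hgx.2 (hm.trans hgx.1) (hδ.trans (hvx.1.trans hvx.2))⟩
  · have hpre : F ⁻¹' Icc 0 1 = Icc 0 1 := by
      rw [F.preimage_Icc, ← hF.map_zero, ← hF.map_one, F.symm_apply_apply, F.symm_apply_apply,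
        hF.map_zero, hF.map_one]
    have hval := hF.pieceVal_preimage g measurableSet_Icc Subset.rfl
    rwa [hpre, htotal] at hval

end IsNormalization

end Normalization

section Scale

theorem exists_natCast_scale {T α : ℝ} (hT : 1 ≤ T) (hα : α ≤ 1) :
    ∃ N : ℕ, 0 < N ∧ T ≤ T ^ α * N ^ 3 ∧ N * T ^ ((2 + α) / 3) ≤ 2 * T := by
  have hT₀ : 0 < T := by linarith
  have hx : 1 ≤ T ^ ((1 - α) / 3) := Real.one_le_rpow hT (by linarith)
  refine ⟨⌈T ^ ((1 - α) / 3)⌉₊, Nat.ceil_pos.2 (by linarith), ?_, ?_⟩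
  · calc T = T ^ α * (T ^ ((1 - α) / 3)) ^ 3 := by
          rw [← Real.rpow_mul_natCast hT₀.le, ← Real.rpow_add hT₀]
          norm_num
      _ ≤ _ := by
        gcongr
        exact Nat.le_ceil _
  · calc (⌈T ^ ((1 - α) / 3)⌉₊ : ℝ) * T ^ ((2 + α) / 3)
      _ ≤ 2 * T ^ ((1 - α) / 3) * T ^ ((2 + α) / 3) := by
        gcongr
        linarith [Nat.ceil_lt_add_one (by linarith : 0 ≤ T ^ ((1 - α) / 3))]
      _ = 2 * T := by
        rw [mul_assoc, ← Real.rpow_add hT₀]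
        norm_num [← add_div]

end Scale

section Regret

variable {k : ℕ} {v : ℝ → ℝ} {F : ℝ ≃o ℝ} {SA : AliceStrategy k} {SB : BobStrategy k} {T : ℕ}

theorem IsNormalization.bobRegret_eq (hF : IsNormalization v F) (hSA : AliceValid k SA)
    (g : ℝ → ℝ) : bobRegret k (fun x => v x * g (F x)) SA SB T =
      ∑ t ∈ Finset.range T,
        roundRegret k g (F ∘ roundCuts k SA SB T t) (roundChoice k SA SB T t) :=
  Finset.sum_congr rfl fun t _ => by
    have hpiece := hF.pieceVal_altPiece (c := roundCuts k SA SB T t) (hSA _ _) g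
    rw [roundRegret, hpiece, hpiece, hpiece]

theorem IsNormalization.aliceRegret_eq (hF : IsNormalization v F) (hSA : AliceValid k SA)
    (g : ℝ → ℝ) : aliceRegret k v (fun x => v x * g (F x)) SA SB T =
      ∑ t ∈ Finset.range T, (stackelbergValue k (fun _ => 1) g -
        volume.real (altPiece k (F ∘ roundCuts k SA SB T t) !roundChoice k SA SB T t)) :=
  Finset.sum_congr rfl fun t _ => by
    rw [hF.stackelbergValue_eq, hF.pieceVal_altPiece_self (c := roundCuts k SA SB T t) (hSA _ _)]

end Regret

theorem k_cut_public_rate_lower_general {δ Δ : ℝ} (hδ : 0 < δ) {k : ℕ} (hk : 2 ≤ k) {α : ℝ}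
    (hα : α ≤ 1) {vA : ℝ → ℝ} (hA : IsValueDensity δ Δ vA) {SA : AliceStrategy k}
    (hSA : AliceValid k SA) {T : ℕ} (hT : 1 ≤ T) :
    ∃ (vB : ℝ → ℝ) (SB : BobStrategy k), IsValueDensity (δ / 2) (2 * Δ) vB ∧
      bobRegret k vB SA SB T ≤ k / 64 * (T : ℝ) ^ α ∧
      1 / 128 * (T : ℝ) ^ ((2 + α) / 3) / k ≤ aliceRegret k vA vB SA SB T := by
  obtain ⟨F, hF⟩ := hA.exists_isNormalization hδ
  let SB : BobStrategy k := fun _ _ c => baseChoice k (F ∘ c)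
  obtain ⟨N, hN, hbobScale, haliceScale⟩ :=
    exists_natCast_scale (T := T) (by exact_mod_cast hT) hα
  obtain ⟨a, w, hslot, hbob, halice⟩ := exists_slot_forall_regret hk
    (y := fun t => F ∘ roundCuts k SA SB T t) (fun t => hF.validCuts_comp_iff.2 (hSA _ _)) T hN
  have hk₀ : (0 : ℝ) < k := by positivity
  refine ⟨fun x => vA x * bumpDensity k a w (F x), SB, ?_, ?_, ?_⟩
  · convert hF.isValueDensity_mul_comp hδ.le hA (measurable_bumpDensity k a w) one_half_pos.le
      (hslot.bumpDensity_mem_Icc hk) (hslot.pieceVal_bumpDensity_Icc hk) using 1 <;> ring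
  · refine (hF.bobRegret_eq hSA _).trans_le (hbob.trans ?_)
    rw [div_le_iff₀ (by positivity)]
    linarith [mul_le_mul_of_nonneg_left hbobScale hk₀.le]
  · refine le_trans ?_ (halice.trans_eq (hF.aliceRegret_eq hSA _).symm)
    rw [div_le_div_iff₀ hk₀ (by positivity)]
    linarith [mul_le_mul_of_nonneg_left haliceScale hk₀.le]

/-- `k ≥ 2` cuts, non-myopic Bob with public learning rate, lower bound:
for `k ≥ 2` and `α ∈ (-1/2, 1)` there exist `c₀, c₁ > 0`, a horizon threshold `T₀`, and
density bounds `0 < δ' ≤ Δ'` such that for every Alice value density, every valid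
deterministic Alice strategy `S_A`, and every `T ≥ T₀`, there are a Bob value density and a
deterministic Bob strategy whose regret over horizon `T` is at most `c₀·T^α` while Alice's
Stackelberg regret over horizon `T` is at least `c₁·T^{(2+α)/3}/k`. -/
theorem k_cut_public_rate_lower (δ Δ : ℝ) (hδ : 0 < δ) (hδΔ : δ ≤ Δ)
    (k : ℕ) (hk : 2 ≤ k) (α : ℝ) (hα₁ : -(1/2 : ℝ) < α) (hα₂ : α < 1) :
    ∃ (c₀ c₁ : ℝ) (T₀ : ℕ) (δ' Δ' : ℝ), 0 < c₀ ∧ 0 < c₁ ∧ 0 < δ' ∧ δ' ≤ Δ' ∧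
      ∀ vA : ℝ → ℝ, IsValueDensity δ Δ vA →
        ∀ SA : AliceStrategy k, AliceValid k SA →
          ∀ T : ℕ, T₀ ≤ T →
            ∃ (vB : ℝ → ℝ) (SB : BobStrategy k),
              IsValueDensity δ' Δ' vB ∧
              bobRegret k vB SA SB T ≤ c₀ * (T : ℝ) ^ α ∧
              c₁ * (T : ℝ) ^ ((2 + α) / 3) / k ≤ aliceRegret k vA vB SA SB T := by
  exact ⟨k / 64, 1 / 128, 1, δ / 2, 2 * Δ, by positivity, by norm_num, by positivity, by linarith,
    fun _ hA _ hSA _ hT => k_cut_public_rate_lower_general hδ hk hα₂.le hA hSA hT⟩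

end
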